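/- Let X = Spec(B) be given by a local presentation attached to the multiplicity as in the context, with elimination algebra G_X^{(d)} and closed point ξ. Then: (i) for every arc φ in X through ξ, ρ_{X,φ} ≥ ⌊ord(G_X^{(d)})⌋ · ord(φ); (ii) the infimum over all arcs φ in X through ξ of ⌊ρ_{X,φ}/ord(φ)⌋ equals ⌊ord(G_X^{(d)})⌋; and (iii) there exists an arc φ_0 in X through ξ with ρ_{X,φ_0}/ord(φ_0) = ord(G_X^{(d)}). -/

import Mathlib

open Polynomial
open scoped ENNReal

noncomputable section

namespace NashMult

/-- The `m`-adic order `ν(f)` of an element `f` of a ring: the largest `n` with `f ∈ m ^ n`. -/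
def adicOrder {R : Type*} [CommRing R] (m : Ideal R) (f : R) : ℕ :=
  sSup {n : ℕ | f ∈ m ^ n}

/-- A subalgebra `G ⊆ R[W]` is *graded* if it is spanned by its "monomials", i.e. it is closed
under taking homogeneous components.  This is the condition expressing that `G = ⊕ I_l W^l`
for a family of ideals `I_l` (with `I_0 = R` and `I_i · I_j ⊆ I_{i+j}` automatic). -/
def Graded {R : Type*} [CommRing R] (G : Subalgebra R (Polynomial R)) : Prop :=
  ∀ p ∈ G, ∀ n : ℕ, (C (p.coeff n) * X ^ n : Polynomial R) ∈ G

/-- A *Rees algebra* over `R`: a finitely generated graded subalgebra of `R[W]`. -/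
def IsReesAlgebra {R : Type*} [CommRing R] (G : Subalgebra R (Polynomial R)) : Prop :=
  G.FG ∧ Graded G

/-- The order of (the Rees algebra) `G` at the closed point of the local ring `(R, m)`:
`ord(G) = inf { ν(f)/n : f W^n a homogeneous element of G, n ≥ 1, f ≠ 0 }`
(with value `∞` for the empty infimum). -/
def reesOrder {R : Type*} [CommRing R] (m : Ideal R) (G : Subalgebra R (Polynomial R)) : ℝ≥0∞ :=
  sInf {q : ℝ≥0∞ | ∃ (f : R) (n : ℕ), f ≠ 0 ∧ 1 ≤ n ∧ (C f * X ^ n : Polynomial R) ∈ G ∧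
    q = (adicOrder m f : ℝ≥0∞) / (n : ℝ≥0∞)}

/-- `G = ⊕ I_l W^l` is *differentially closed* relative to a family `D` of derivations if
`I_{l+1} ⊆ I_l` and `D_j (I_l) ⊆ I_{l-1}` for all `l ≥ 1` and all `j`. -/
def DiffClosed {k R ι : Type*} [CommRing k] [CommRing R] [Algebra k R]
    (D : ι → Derivation k R R) (G : Subalgebra R (Polynomial R)) : Prop :=
  (∀ (f : R) (l : ℕ), 1 ≤ l → (C f * X ^ (l + 1) : Polynomial R) ∈ G →
      (C f * X ^ l : Polynomial R) ∈ G) ∧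
  (∀ (f : R) (l : ℕ) (j : ι), (C f * X ^ (l + 1) : Polynomial R) ∈ G →
      (C (D j f) * X ^ l : Polynomial R) ∈ G)

/-- `Diff(M)`: the smallest graded differentially closed subalgebra of `R[W]` containing the
set `M`. -/
def diffClosure {k R ι : Type*} [CommRing k] [CommRing R] [Algebra k R]
    (D : ι → Derivation k R R) (M : Set (Polynomial R)) : Subalgebra R (Polynomial R) :=
  sInf {G : Subalgebra R (Polynomial R) | M ⊆ ↑G ∧ Graded G ∧ DiffClosed D G}

/-- The image `ψ(G)` of a Rees algebra `G` over `R` under a homomorphism (arc) `ψ : R → K⟦t⟧`: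
the Rees algebra over `K⟦t⟧` generated by all `ψ(g) W^l` for `g W^l` a homogeneous element of
`G` with `ψ(g) ≠ 0`. -/
def arcImage {R A : Type*} [CommRing R] [CommRing A] (ψ : R → A)
    (G : Subalgebra R (Polynomial R)) : Subalgebra A (Polynomial A) :=
  Algebra.adjoin A {p : Polynomial A | ∃ (g : R) (l : ℕ),
    (C g * X ^ l : Polynomial R) ∈ G ∧ ψ g ≠ 0 ∧ p = C (ψ g) * X ^ l}

/-- The order `ord(ψ)` of an arc `ψ : R → K⟦t⟧`: the largest `n` such that
`ψ(m) ⊆ t^n` (`t` being the ideal `tI`). -/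
def homOrd {R A : Type*} [CommRing R] [CommRing A] (m : Ideal R) (tI : Ideal A)
    (ψ : R → A) : ℕ :=
  sSup {n : ℕ | ∀ s ∈ m, ψ s ∈ tI ^ n}

/-- The maximal ideal `(t)` of `K⟦t⟧`. -/
def tId (K : Type*) [CommRing K] : Ideal (PowerSeries K) :=
  Ideal.span {(PowerSeries.X : PowerSeries K)}

/-- The `t`-adic order on `K⟦t⟧`. -/
def tOrd {K : Type*} [CommRing K] (g : PowerSeries K) : ℕ :=
  adicOrder (tId K) g

/-- The family of ideals `I_l` of the graded algebra `G = ⊕ I_l W^l`. -/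
def idealFam {R : Type*} [CommRing R] (G : Subalgebra R (Polynomial R)) (l : ℕ) : Ideal R :=
  Submodule.comap (Polynomial.monomial l : R →ₗ[R] Polynomial R) (Subalgebra.toSubmodule G)

/-- The closed point of the local ring `(R, m)` belongs to the singular locus of
`G = ⊕ I_l W^l`, i.e. `ν(I_l) ≥ l` for all `l ≥ 1`. -/
def SingFam {R : Type*} [CommRing R] (m : Ideal R) (I : ℕ → Ideal R) : Prop :=
  ∀ l : ℕ, 1 ≤ l → I l ≤ m ^ l

/-- The transform `⊕ (I_l · T^{-l}) W^l` of a Rees algebra `⊕ I_l W^l` over a DVR with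
uniformizer `T` (when the closed point lies in the singular locus, `I_l ⊆ (T^l)` and
`I_l · T^{-l} = (I_l : (T^l))`). -/
def transformFam {R : Type*} [CommRing R] (T : R) (I : ℕ → Ideal R) : ℕ → Ideal R :=
  fun l => (I l).colon (Ideal.span {T ^ l})

/-- The persistance: the least number `κ` of transforms needed so that the closed point no
longer lies in the singular locus. -/
def persist {R : Type*} [CommRing R] (m : Ideal R) (T : R)
    (G : Subalgebra R (Polynomial R)) : ℕ :=
  sInf {κ : ℕ | ¬ SingFam m ((transformFam T)^[κ] (idealFam G))}

/-- The set of elements of a ring integral over a subset `s` (monic equation with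
coefficients in `s`). -/
def intClos {A : Type*} [CommRing A] (s : Set A) : Set A :=
  {p : A | ∃ q : Polynomial A, q.Monic ∧ (∀ n, q.coeff n ∈ s) ∧ Polynomial.eval p q = 0}


/-- The monic polynomial `f = x^b + B_{b-2} x^{b-2} + ⋯ + B_1 x + B_0` with coefficients
`B_j = Bc j` (only `j ≤ b - 2` is relevant). -/
def minPolyOf {S : Type*} [CommRing S] (b : ℕ) (Bc : ℕ → S) : Polynomial S :=
  Polynomial.X ^ b + ∑ j ∈ Finset.range (b - 1), Polynomial.C (Bc j) * Polynomial.X ^ j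


/-- The maximal ideal `(z_1, …, z_d)` of the polynomial ring `k[z_1, …, z_d]`
(the kernel of evaluation at the origin). -/
def mPoly (k : Type) [Field k] (d : ℕ) : Ideal (MvPolynomial (Fin d) k) :=
  RingHom.ker (MvPolynomial.aeval (fun _ => (0 : k)) : MvPolynomial (Fin d) k →ₐ[k] k)

instance {k : Type} [Field k] {d : ℕ} : (mPoly k d).IsMaximal :=
  RingHom.ker_isMaximal_of_surjective _ (fun a => ⟨MvPolynomial.C a, by simp⟩)

instance {k : Type} [Field k] {d : ℕ} : (mPoly k d).IsPrime :=
  (inferInstance : (mPoly k d).IsMaximal).isPrime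

/-- `IsSLoc k d S` says that `S` is (identified with) the localization of `k[z_1, …, z_d]`
at the maximal ideal `(z_1, …, z_d)`. -/
abbrev IsSLoc (k : Type) [Field k] (d : ℕ) (S : Type) [CommRing S]
    [Algebra (MvPolynomial (Fin d) k) S] : Prop :=
  IsLocalization.AtPrime S (mPoly k d)

/-- The element `z_j` of `S`. -/
def zvar (k : Type) [Field k] (d : ℕ) (S : Type) [CommRing S]
    [Algebra (MvPolynomial (Fin d) k) S] (j : Fin d) : S :=
  algebraMap (MvPolynomial (Fin d) k) S (MvPolynomial.X j)

/-- The maximal ideal `m = (z_1, …, z_d)` of the local ring `S`. -/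
def mS (k : Type) [Field k] (d : ℕ) (S : Type) [CommRing S]
    [Algebra (MvPolynomial (Fin d) k) S] : Ideal S :=
  (mPoly k d).map (algebraMap (MvPolynomial (Fin d) k) S)


variable (k : Type) [Field k] (d : ℕ)
variable (S : Type) [CommRing S] [Algebra (MvPolynomial (Fin d) k) S] [Algebra k S]

/-- A local presentation, attached to the multiplicity, of a `d`-dimensional variety
`X = Spec B` at the closed point `ξ`:  `B = S[x_1,…,x_{n-d}]/I` with `I` prime,
`S → B` injective and finite, and the minimal polynomial over `Frac S` of the class `θ_i`
of `x_i` is `f_i = x_i^{b_i} + B_{i,b_i-2} x_i^{b_i-2} + ⋯ + B_{i,0}` with `b_i ≥ 2`,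
`B_{i,j} ∈ m^{b_i - j}`, and some `B_{i,j} ≠ 0`. -/
structure Presentation [IsDomain S] : Type 1 where
  /-- the number `n - d ≥ 1` of extra variables `x_i` -/
  e : ℕ
  he : 1 ≤ e
  /-- the prime ideal `I ⊆ S[x_1,…,x_{n-d}]` defining `X` -/
  I : Ideal (MvPolynomial (Fin e) S)
  hprime : I.IsPrime
  hinj : Function.Injective (algebraMap S (MvPolynomial (Fin e) S ⧸ I))
  hfinite : Module.Finite S (MvPolynomial (Fin e) S ⧸ I)
  /-- the degrees `b_i ≥ 2` -/
  b : Fin e → ℕ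
  hb : ∀ i, 2 ≤ b i
  /-- the coefficients `B_{i,j}` (only `j ≤ b_i - 2` is relevant) -/
  Bc : Fin e → ℕ → S
  /-- `f_i(θ_i) = 0` -/
  hroot : ∀ i, Polynomial.aeval (Ideal.Quotient.mk I (MvPolynomial.X i))
    (minPolyOf (b i) (Bc i)) = 0
  /-- `f_i` is irreducible over `Frac S`, i.e. it is the minimal polynomial of `θ_i` -/
  hirr : ∀ i, Irreducible ((minPolyOf (b i) (Bc i)).map (algebraMap S (FractionRing S)))
  /-- `B_{i,j} ∈ m^{b_i - j}` -/
  hmem : ∀ i, ∀ j ≤ b i - 2, Bc i j ∈ (mS k d S) ^ (b i - j)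
  /-- some `B_{i,j} ≠ 0` -/
  hnz : ∃ i, ∃ j ≤ b i - 2, Bc i j ≠ 0

variable [IsDomain S]
variable {k d S}

/-- The coordinate ring `B = S[x_1,…,x_{n-d}]/I` of `X`. -/
abbrev BRing (P : Presentation k d S) : Type :=
  MvPolynomial (Fin P.e) S ⧸ P.I

/-- The class `θ_i` of `x_i` in `B`. -/
def theta (P : Presentation k d S) (i : Fin P.e) : BRing P :=
  Ideal.Quotient.mk P.I (MvPolynomial.X i)

/-- The elimination algebra in dimension `d`:
`G_X^{(d)} = Diff( S[ B_{i,j} W^{b_i - j} : i, j ] )`, a Rees algebra over `S`. -/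
def elimAlg (P : Presentation k d S) (D : Fin d → Derivation k S S) :
    Subalgebra S (Polynomial S) :=
  diffClosure D {p : Polynomial S | ∃ i, ∃ j ≤ P.b i - 2,
    p = Polynomial.C (P.Bc i j) * Polynomial.X ^ (P.b i - j)}

/-- An arc in `X` through `ξ` (with the required nonvanishing): a `k`-algebra homomorphism
`φ : B → K⟦t⟧` sending the maximal ideal of `B` at `ξ` into `(t)`, with all `φ(θ_i)` and
`φ(z_j)` nonzero. -/
def IsArc (P : Presentation k d S) {K : Type} [Field K] [Algebra k K]
    (φ : BRing P →ₐ[k] PowerSeries K) : Prop :=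
  (∀ s ∈ mS k d S, φ (algebraMap S (BRing P) s) ∈ tId K) ∧
  (∀ i, φ (theta P i) ∈ tId K) ∧
  (∀ i, φ (theta P i) ≠ 0) ∧
  (∀ j, φ (algebraMap S (BRing P) (zvar k d S j)) ≠ 0)

/-- The order of an arc: the minimum of the `t`-adic orders of the `φ(θ_i)` and the
`φ(z_j)`. -/
def arcOrd (P : Presentation k d S) {K : Type} [Field K] [Algebra k K]
    (φ : BRing P →ₐ[k] PowerSeries K) : ℕ :=
  sInf ((Set.range fun i => tOrd (φ (theta P i))) ∪
    (Set.range fun j => tOrd (φ (algebraMap S (BRing P) (zvar k d S j)))))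

/-- The contact algebra `G^{(1)}_{X_0,φ}`: the Rees algebra over `K⟦t⟧` generated by the
`φ(θ_i) W` together with all `φ(g) W^l` for `g W^l` a homogeneous element of `G_X^{(d)}`
with `φ(g) ≠ 0`. -/
def contactAlg (P : Presentation k d S) (D : Fin d → Derivation k S S)
    {K : Type} [Field K] [Algebra k K] (φ : BRing P →ₐ[k] PowerSeries K) :
    Subalgebra (PowerSeries K) (Polynomial (PowerSeries K)) :=
  Algebra.adjoin (PowerSeries K)
    ((Set.range fun i => (Polynomial.C (φ (theta P i)) * Polynomial.X :
        Polynomial (PowerSeries K))) ∪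
      {p : Polynomial (PowerSeries K) | ∃ (g : S) (l : ℕ),
        (Polynomial.C g * Polynomial.X ^ l : Polynomial S) ∈ elimAlg P D ∧
        φ (algebraMap S (BRing P) g) ≠ 0 ∧
        p = Polynomial.C (φ (algebraMap S (BRing P) g)) * Polynomial.X ^ l})

/-- The order of contact `r_{X,φ}` of the arc `φ` with `Max mult(X)`: the order of the
contact algebra at the closed point of `K⟦t⟧`. -/
def rOrd (P : Presentation k d S) (D : Fin d → Derivation k S S)
    {K : Type} [Field K] [Algebra k K] (φ : BRing P →ₐ[k] PowerSeries K) : ℝ≥0∞ :=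
  reesOrder (tId K) (contactAlg P D φ)

/-- The persistance `ρ_{X,φ}`: the least number of transforms of the contact algebra
(i.e. of point blow-ups directed by `φ`) needed to make the closed point leave the
singular locus, that is, to lower the Nash multiplicity. -/
def rho (P : Presentation k d S) (D : Fin d → Derivation k S S)
    {K : Type} [Field K] [Algebra k K] (φ : BRing P →ₐ[k] PowerSeries K) : ℕ :=
  persist (tId K) (PowerSeries.X : PowerSeries K) (contactAlg P D φ)


/-!
For a Rees algebra `G` over a discrete valuation ring, each transform lowers the order by one, so
the persistance of an arc is the integer part of the order of its contact algebra.

Let `r = ord(G_X^{(d)})`.  The homogeneous elements of slope at least `r ≥ 1` form a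
differentially closed Rees algebra, hence `r` is already attained on the generators, as the minimum
of the `ν(B_{i,j}) / (b_i - j)`.  The equation `f_i(θ_i) = 0` then forces `φ(θ_i)` to have order at
least `r · ord(φ)` along any arc `φ`, so all generators of the contact algebra have slope at least
`r · ord(φ)`; this gives the lower bound.

Equality holds for the generic line `z_j = u_j t` with algebraically independent `u_j`, whose
`t`-adic order is the `m`-adic order of `S`.  Over an algebraically closed field of characteristic
zero it lifts to the finite extension `B` after a ramified base change: normalize a component of
the pullback and expand at a closed point.  Replacing `t` by a power of `t` makes `r · ord(φ)` an
integer, so that no integer part is lost.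
-/

section ReesOrder

variable {R : Type*} [CommRing R] {m : Ideal R}

theorem mem_pow_iff_le_adicOrder (hm : ⨅ n : ℕ, m ^ n = ⊥) {f : R} (hf : f ≠ 0) {n : ℕ} :
    f ∈ m ^ n ↔ n ≤ adicOrder m f := by
  obtain ⟨N, hN⟩ : ∃ N : ℕ, f ∉ m ^ N := by
    simpa [← Ideal.mem_bot, ← hm, Ideal.mem_iInf] using hf
  have hbdd : BddAbove {n : ℕ | f ∈ m ^ n} :=
    ⟨N, fun n hn => le_of_not_ge fun h => hN (Ideal.pow_le_pow_right h hn)⟩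
  exact ⟨fun h => le_csSup hbdd h,
    fun h => Ideal.pow_le_pow_right h (Nat.sSup_mem ⟨0, by simp⟩ hbdd)⟩

/-- The Rees algebra `⊕ m ^ ⌈r l⌉ W ^ l` of all homogeneous elements of slope at least `r`.
For an `m`-adically separated ring, `r ≤ ord(G)` amounts to the homogeneous elements of `G`
lying in it. -/
def slopeSubalgebra (m : Ideal R) (r : NNReal) : Subalgebra R R[X] where
  carrier := {p | ∀ l : ℕ, p.coeff l ∈ m ^ ⌈r * l⌉₊}
  mul_mem' {p q} hp hq l := by
    rw [coeff_mul]
    refine sum_mem fun x hx => ?_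
    have hceil : ⌈r * l⌉₊ ≤ ⌈r * x.1⌉₊ + ⌈r * x.2⌉₊ := by
      rw [← Finset.HasAntidiagonal.mem_antidiagonal.mp hx, Nat.cast_add, mul_add]
      exact Nat.ceil_add_le _ _
    exact Ideal.pow_le_pow_right hceil (pow_add m _ _ ▸ Ideal.mul_mem_mul (hp x.1) (hq x.2))
  add_mem' hp hq l := by
    rw [coeff_add]
    exact add_mem (hp l) (hq l)
  algebraMap_mem' a l := by
    rw [Polynomial.algebraMap_apply, Algebra.algebraMap_self_apply, coeff_C]
    split_ifs with h
    · simp [h]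
    · exact zero_mem _

theorem C_mul_X_pow_mem_slopeSubalgebra_iff {r : NNReal} {f : R} {l : ℕ} :
    C f * X ^ l ∈ slopeSubalgebra m r ↔ f ∈ m ^ ⌈r * l⌉₊ := by
  refine ⟨fun h => by simpa using h l, fun h n => ?_⟩
  rw [coeff_C_mul_X_pow]
  split_ifs with hn
  · exact hn ▸ h
  · exact zero_mem _

theorem graded_slopeSubalgebra (r : NNReal) : Graded (slopeSubalgebra m r) :=
  fun _ hp n => C_mul_X_pow_mem_slopeSubalgebra_iff.mpr (hp n)

theorem le_reesOrder_iff (hm : ⨅ n : ℕ, m ^ n = ⊥) {G : Subalgebra R R[X]} {r : NNReal} :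
    (r : ℝ≥0∞) ≤ reesOrder m G ↔ ∀ (f : R) (n : ℕ), C f * X ^ n ∈ G → f ∈ m ^ ⌈r * n⌉₊ := by
  have hslope {f : R} {n : ℕ} (hf : f ≠ 0) (hn : 1 ≤ n) :
      (r : ℝ≥0∞) ≤ adicOrder m f / n ↔ f ∈ m ^ ⌈r * n⌉₊ := by
    rw [ENNReal.le_div_iff_mul_le (by simp; omega) (by simp), mem_pow_iff_le_adicOrder hm hf,
      Nat.ceil_le]
    exact_mod_cast Iff.rfl
  refine le_sInf_iff.trans ⟨fun h f n hfn => ?_, ?_⟩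
  · rcases eq_or_ne f 0 with rfl | hf
    · exact zero_mem _
    rcases Nat.eq_zero_or_pos n with rfl | hn
    · simp
    · exact (hslope hf hn).mp (h _ ⟨f, n, hf, hn, hfn, rfl⟩)
  · rintro h _ ⟨f, n, hf, hn, hfn, rfl⟩
    exact (hslope hf hn).mpr (h f n hfn)

theorem le_reesOrder_of_le_slopeSubalgebra (hm : ⨅ n : ℕ, m ^ n = ⊥) {G : Subalgebra R R[X]}
    {r : NNReal} (hG : G ≤ slopeSubalgebra m r) : (r : ℝ≥0∞) ≤ reesOrder m G :=
  (le_reesOrder_iff hm).mpr fun _ _ h => C_mul_X_pow_mem_slopeSubalgebra_iff.mp (hG h)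

theorem derivation_mem_pow {A : Type*} [CommRing A] [Algebra A R] (D : Derivation A R R) :
    ∀ {n : ℕ} {f : R}, f ∈ m ^ (n + 1) → D f ∈ m ^ n
  | 0, _, _ => by simp
  | n + 1, f, hf => by
    rw [pow_succ'] at hf
    refine Submodule.mul_induction_on hf (fun a ha g hg => ?_) fun x y hx hy => ?_
    · rw [Derivation.leibniz, smul_eq_mul, smul_eq_mul]
      exact add_mem (pow_succ' m n ▸ Ideal.mul_mem_mul ha (derivation_mem_pow D hg))
        (Ideal.mul_mem_right _ _ hg)
    · exact map_add D x y ▸ add_mem hx hy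

theorem diffClosed_slopeSubalgebra {A ι : Type*} [CommRing A] [Algebra A R]
    (D : ι → Derivation A R R) {r : NNReal} (hr : 1 ≤ r) :
    DiffClosed D (slopeSubalgebra m r) := by
  have hceil (l : ℕ) : ⌈r * l⌉₊ + 1 ≤ ⌈r * (l + 1 : ℕ)⌉₊ := by
    rw [← Nat.ceil_add_one (by positivity)]
    push_cast
    gcongr
    linear_combination hr
  simp only [DiffClosed, C_mul_X_pow_mem_slopeSubalgebra_iff]
  exact ⟨fun f l _ hf => Ideal.pow_le_pow_right (by grind) hf,
    fun f l j hf => derivation_mem_pow _ (Ideal.pow_le_pow_right (hceil l) hf)⟩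

theorem diffClosure_le_slopeSubalgebra {A ι : Type*} [CommRing A] [Algebra A R]
    (D : ι → Derivation A R R) {M : Set R[X]} {r : NNReal} (hr : 1 ≤ r)
    (hM : M ⊆ slopeSubalgebra m r) : diffClosure D M ≤ slopeSubalgebra m r :=
  sInf_le ⟨hM, graded_slopeSubalgebra r, diffClosed_slopeSubalgebra D hr⟩

end ReesOrder

section Persistence

variable {R : Type*} [CommRing R]

theorem mem_idealFam {G : Subalgebra R R[X]} {l : ℕ} {f : R} :
    f ∈ idealFam G l ↔ C f * X ^ l ∈ G := by
  rw [C_mul_X_pow_eq_monomial]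
  rfl

theorem mem_iterate_transformFam {T : R} {I : ℕ → Ideal R} {κ l : ℕ} {f : R} :
    f ∈ (transformFam T)^[κ] I l ↔ f * T ^ (κ * l) ∈ I l := by
  induction κ generalizing f with
  | zero => simp
  | succ κ ih =>
    rw [Function.iterate_succ_apply', transformFam, Ideal.mem_colon_span_singleton, ih, mul_assoc,
      ← pow_add, Nat.succ_mul, Nat.add_comm]

variable [IsDomain R] {T : R}

theorem singFam_iterate_transformFam_iff (hT : T ≠ 0)
    (hsep : ⨅ n : ℕ, Ideal.span {T} ^ n = ⊥) {G : Subalgebra R R[X]} {κ : ℕ} :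
    SingFam (Ideal.span {T}) ((transformFam T)^[κ] (idealFam G)) ↔
      ((κ + 1 : ℕ) : ℝ≥0∞) ≤ reesOrder (Ideal.span {T}) G := by
  have hceil (l : ℕ) : ⌈((κ + 1 : ℕ) : NNReal) * l⌉₊ = (κ + 1) * l := by
    rw [← Nat.cast_mul, Nat.ceil_natCast]
  have hle : ((κ + 1 : ℕ) : ℝ≥0∞) ≤ reesOrder (Ideal.span {T}) G ↔
      ∀ (f : R) (l : ℕ), C f * X ^ l ∈ G → T ^ ((κ + 1) * l) ∣ f := by
    simpa only [hceil, Ideal.span_singleton_pow, Ideal.mem_span_singleton, ENNReal.coe_natCast]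
      using le_reesOrder_iff hsep (G := G) (r := (κ + 1 : ℕ))
  simp only [hle, SingFam, SetLike.le_def, mem_iterate_transformFam, mem_idealFam,
    Ideal.span_singleton_pow, Ideal.mem_span_singleton]
  refine ⟨fun h f l hf => ?_, fun h l _ f hf => ?_⟩
  · rcases Nat.eq_zero_or_pos l with rfl | hl
    · simp
    -- Each of the `κ + 1` blow ups extracts one more factor `T ^ l` from `f`.
    suffices ∀ i ≤ κ + 1, T ^ (i * l) ∣ f from this _ le_rfl
    intro i
    induction i with
    | zero => simp
    | succ i ih =>
      intro hi
      obtain ⟨g, rfl⟩ := ih (by omega)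
      have hmem : C (g * T ^ (κ * l)) * X ^ l ∈ G := by
        have hsplit : g * T ^ (κ * l) = T ^ ((κ - i) * l) * (T ^ (i * l) * g) := by
          rw [← mul_assoc, ← pow_add, ← add_mul, Nat.sub_add_cancel (by omega), mul_comm]
        rw [hsplit, C_mul, mul_assoc, ← smul_eq_C_mul]
        exact G.smul_mem hf _
      rw [Nat.succ_mul, pow_add]
      exact mul_dvd_mul_left _ (h l hl hmem)
  · have hdvd := h _ l hf
    rw [Nat.succ_mul, add_comm, pow_add] at hdvd
    exact (mul_dvd_mul_iff_right (pow_ne_zero _ hT)).mp hdvd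

theorem persist_eq_floor_reesOrder (hT : T ≠ 0) (hsep : ⨅ n : ℕ, Ideal.span {T} ^ n = ⊥)
    (G : Subalgebra R R[X]) :
    persist (Ideal.span {T}) T G = ⌊(reesOrder (Ideal.span {T}) G).toReal⌋₊ := by
  simp only [persist, singFam_iterate_transformFam_iff hT hsep, not_le]
  cases reesOrder (Ideal.span {T}) G with
  | top => simp
  | coe r =>
    have hset : {κ : ℕ | (r : ℝ≥0∞) < (κ + 1 : ℕ)} = Set.Ici ⌊(r : ℝ)⌋₊ := by
      ext κ
      rw [Set.mem_ofPred_eq, Set.mem_Ici, ← Nat.lt_add_one_iff, Nat.floor_lt r.coe_nonneg]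
      norm_cast
    rw [hset, csInf_Ici, ENNReal.coe_toReal]

end Persistence

section PowerSeriesOrder

theorem mem_tId_pow_iff {K : Type*} [CommRing K] {n : ℕ} {f : PowerSeries K} :
    f ∈ tId K ^ n ↔ (n : ℕ∞) ≤ f.order := by
  rw [tId, Ideal.span_singleton_pow, Ideal.mem_span_singleton,
    PowerSeries.order_eq_emultiplicity_X, pow_dvd_iff_le_emultiplicity]

theorem ne_zero_of_order_eq_natCast {R : Type*} [Semiring R] {f : PowerSeries R} {n : ℕ}
    (hf : f.order = n) : f ≠ 0 :=
  PowerSeries.order_eq_top.not.mp (hf ▸ ENat.natCast_ne_top n)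

theorem iInf_tId_pow (K : Type*) [CommRing K] : ⨅ n : ℕ, tId K ^ n = ⊥ := by
  refine (Submodule.eq_bot_iff _).mpr fun f hf => PowerSeries.order_eq_top.mp ?_
  exact ENat.eq_top_iff_forall_ge.mpr fun n => mem_tId_pow_iff.mp (Ideal.mem_iInf.mp hf n)

theorem coe_tOrd {K : Type*} [CommRing K] {f : PowerSeries K} (hf : f ≠ 0) :
    (tOrd f : ℕ∞) = f.order := by
  rw [← PowerSeries.coe_toNat_order hf, Nat.cast_inj]
  refine eq_of_forall_le_iff fun n => ?_
  rw [tOrd, ← mem_pow_iff_le_adicOrder (iInf_tId_pow K) hf, mem_tId_pow_iff,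
    ← Nat.cast_le (α := ℕ∞), PowerSeries.coe_toNat_order hf]

theorem order_map_eq_mul {K L : Type*} [Field K] [Field L] (φ : PowerSeries K →+* PowerSeries L)
    (hφ : (φ PowerSeries.X).order ≠ 0) (f : PowerSeries K) :
    (φ f).order = (φ PowerSeries.X).order * f.order := by
  rcases eq_or_ne f 0 with rfl | hf
  · rw [map_zero, PowerSeries.order_zero, PowerSeries.order_zero, ENat.mul_top hφ]
  have hunit := (PowerSeries.isUnit_divided_by_X_pow_order hf).map φ
  rw [← PowerSeries.coe_toNat_order hf, mul_comm, ← nsmul_eq_mul, ← PowerSeries.order_pow]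
  conv_lhs => rw [← PowerSeries.X_pow_order_mul_divXPowOrder (f := f), map_mul, map_pow,
    PowerSeries.order_mul, PowerSeries.order_zero_of_unit hunit, add_zero]

end PowerSeriesOrder

section TaylorExpansion

variable {K V : Type*} [CommRing K] [CommRing V] [Algebra K V] {p : V} {ε : V →ₐ[K] K}

theorem exists_linearMap_eq_algebraMap_add_mul (hp : p ∈ nonZeroDivisors V)
    (hε : RingHom.ker ε = Ideal.span {p}) :
    ∃ σ : V →ₗ[K] V, ∀ x, x = algebraMap K V (ε x) + p * σ x := by
  let sub : V →ₗ[K] V := .id - (Algebra.linearMap K V).comp ε.toLinearMap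
  have hsub (x : V) : sub x ∈ LinearMap.range (LinearMap.mulLeft K p) := by
    have hker : x - algebraMap K V (ε x) ∈ RingHom.ker ε := by simp [RingHom.mem_ker]
    obtain ⟨y, hy⟩ := Ideal.mem_span_singleton.mp (hε ▸ hker)
    exact ⟨y, hy.symm⟩
  let mulEquiv := LinearEquiv.ofInjective (LinearMap.mulLeft K p) fun _ _ h =>
    (mul_cancel_left_mem_nonZeroDivisors hp).mp h
  refine ⟨mulEquiv.symm.toLinearMap ∘ₗ sub.codRestrict _ hsub, fun x => ?_⟩
  have hmul : p * mulEquiv.symm ⟨sub x, hsub x⟩ = sub x :=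
    congrArg Subtype.val (mulEquiv.apply_symm_apply ⟨sub x, hsub x⟩)
  exact (add_eq_of_eq_sub' hmul).symm

/-- The expansion `x = ∑ ε(σⁿ x) pⁿ` of the elements of `V` in powers of an element `p`, as a
linear map to power series.  Here `ε` is reduction modulo `p` and `σ x = (x - ε x) / p`, so that
iterating `σ` produces the successive coefficients. -/
def taylorExpansion (ε : V →ₐ[K] K) (σ : V →ₗ[K] V) : V →ₗ[K] PowerSeries K where
  toFun x := PowerSeries.mk fun n => ε ((σ ^ n) x)
  map_add' x y := by ext; simp
  map_smul' c x := by ext; simp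

variable {σ : V →ₗ[K] V}

theorem taylorExpansion_eq_C_add (x : V) :
    taylorExpansion ε σ x = PowerSeries.C (ε x) + PowerSeries.X * taylorExpansion ε σ (σ x) := by
  ext (_ | n)
  · simp [taylorExpansion]
  · simp [taylorExpansion, PowerSeries.coeff_succ_X_mul, pow_succ]

theorem taylorExpansion_mul_left (hp : p ∈ nonZeroDivisors V) (hεp : ε p = 0)
    (hσ : ∀ x, x = algebraMap K V (ε x) + p * σ x) (x : V) :
    taylorExpansion ε σ (p * x) = PowerSeries.X * taylorExpansion ε σ x := by
  have hzero : ε (p * x) = 0 := by rw [map_mul, hεp, zero_mul]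
  have hshift : σ (p * x) = x := by
    have h := hσ (p * x)
    rw [hzero, map_zero, zero_add] at h
    exact (mul_cancel_left_mem_nonZeroDivisors hp).mp h.symm
  rw [taylorExpansion_eq_C_add, hzero, hshift, map_zero, zero_add]

theorem taylorExpansion_mul (hp : p ∈ nonZeroDivisors V) (hεp : ε p = 0)
    (hσ : ∀ x, x = algebraMap K V (ε x) + p * σ x) (x y : V) :
    taylorExpansion ε σ (x * y) = taylorExpansion ε σ x * taylorExpansion ε σ y := by
  let τ := taylorExpansion ε σ
  have hrec (x : V) :
      τ (x * y) - τ x * τ y = PowerSeries.X * (τ (σ x * y) - τ (σ x) * τ y) := by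
    have hx : τ x = PowerSeries.C (ε x) + PowerSeries.X * τ (σ x) := taylorExpansion_eq_C_add x
    have hxy : τ (x * y) = PowerSeries.C (ε x) * τ y + PowerSeries.X * τ (σ x * y) := by
      conv_lhs => rw [hσ x, add_mul, mul_assoc, map_add, ← Algebra.smul_def, map_smul,
        PowerSeries.smul_eq_C_mul]
      rw [taylorExpansion_mul_left hp hεp hσ]
    rw [hx, hxy]
    ring
  have hdvd (n : ℕ) (x : V) : PowerSeries.X ^ n ∣ τ (x * y) - τ x * τ y := by
    induction n generalizing x with
    | zero => simp
    | succ n ih => rw [hrec, pow_succ']; exact mul_dvd_mul_left _ (ih _)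
  refine sub_eq_zero.mp (PowerSeries.ext fun n => ?_)
  simpa using PowerSeries.X_pow_dvd_iff.mp (hdvd (n + 1) x) n n.lt_succ_self

theorem X_pow_dvd_taylorExpansion_iff (hp : p ∈ nonZeroDivisors V) (hεp : ε p = 0)
    (hσ : ∀ x, x = algebraMap K V (ε x) + p * σ x) {n : ℕ} {x : V} :
    PowerSeries.X ^ n ∣ taylorExpansion ε σ x ↔ p ^ n ∣ x := by
  induction n generalizing x with
  | zero => simp
  | succ n ih =>
    refine ⟨fun h => ?_, fun ⟨y, hy⟩ => ?_⟩
    · have hεx : ε x = 0 := by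
        simpa [taylorExpansion] using PowerSeries.X_pow_dvd_iff.mp h 0 n.succ_pos
      rw [taylorExpansion_eq_C_add, hεx, map_zero, zero_add, pow_succ'] at h
      rw [hσ x, hεx, map_zero, zero_add, pow_succ']
      have hX : IsLeftRegular (PowerSeries.X : PowerSeries K) := PowerSeries.X_mul_injective
      exact mul_dvd_mul_left p (ih.mp (hX.dvd_cancel_left.mp h))
    · rw [hy, pow_succ' p, mul_assoc, taylorExpansion_mul_left hp hεp hσ, pow_succ']
      exact mul_dvd_mul_left _ (ih.mpr (dvd_mul_right _ _))

theorem exists_algHom_powerSeries_order_eq_emultiplicity (hp : p ∈ nonZeroDivisors V)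
    (hε : RingHom.ker ε = Ideal.span {p}) :
    ∃ τ : V →ₐ[K] PowerSeries K, ∀ x, (τ x).order = emultiplicity p x := by
  obtain ⟨σ, hσ⟩ := exists_linearMap_eq_algebraMap_add_mul hp hε
  have hεp : ε p = 0 := RingHom.mem_ker.mp (hε ▸ Ideal.mem_span_singleton_self p)
  have hone : taylorExpansion ε σ 1 = 1 := by
    have hpσ : p * σ 1 = 0 := by simpa using hσ 1
    rw [taylorExpansion_eq_C_add, hp.1 _ hpσ, map_zero, mul_zero, add_zero, map_one, map_one]
  refine ⟨AlgHom.ofLinearMap (taylorExpansion ε σ) hone (taylorExpansion_mul hp hεp hσ),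
    fun x => ?_⟩
  rw [PowerSeries.order_eq_emultiplicity_X, emultiplicity_eq_emultiplicity_iff]
  exact fun n => X_pow_dvd_taylorExpansion_iff hp hεp hσ

end TaylorExpansion

section ArcExtension

theorem exists_finite_extension {R A B : Type*} [CommRing R] [CommRing A] [IsDomain A]
    [CommRing B] [IsDomain B] [Algebra R A] [FaithfulSMul R A] [Algebra R B] [FaithfulSMul R B]
    [Module.Finite R B] :
    ∃ C : Subalgebra A (AlgebraicClosure (FractionRing A)),
      Module.Finite A C ∧ Nonempty (B →ₐ[R] C) := by
  have : IsDomain R := (FaithfulSMul.algebraMap_injective R A).isDomain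
  have : FaithfulSMul A (AlgebraicClosure (FractionRing A)) :=
    FaithfulSMul.trans A (FractionRing A) _
  have : FaithfulSMul R (AlgebraicClosure (FractionRing A)) := FaithfulSMul.trans R A _
  let lift : B →ₐ[R] AlgebraicClosure (FractionRing A) := IsAlgClosed.lift
  let baseChange : TensorProduct R A B →ₐ[A] AlgebraicClosure (FractionRing A) :=
    Algebra.TensorProduct.lift (Algebra.ofId A _) lift fun _ _ => mul_comm _ _
  exact ⟨baseChange.range, Module.Finite.range baseChange.toLinearMap,
    ⟨(baseChange.rangeRestrict.restrictScalars R).comp Algebra.TensorProduct.includeRight⟩⟩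

variable {K : Type*} [Field K] [IsAlgClosed K]

theorem algebraMap_bijective_of_isIntegral_powerSeries (F : Type*) [Field F] [Algebra K F]
    [Algebra (PowerSeries K) F] [IsScalarTower K (PowerSeries K) F]
    [Algebra.IsIntegral (PowerSeries K) F] : Function.Bijective (algebraMap K F) := by
  have hmax : (RingHom.ker (algebraMap (PowerSeries K) F)).IsMaximal :=
    Ideal.isMaximal_comap_of_isIntegral_of_isMaximal ⊥
  have hX : algebraMap (PowerSeries K) F PowerSeries.X = 0 := by
    rw [← RingHom.mem_ker, IsLocalRing.eq_maximalIdeal hmax, IsLocalRing.mem_maximalIdeal]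
    exact PowerSeries.X_prime.not_isUnit
  have hfactor : algebraMap (PowerSeries K) F =
      (algebraMap K F).comp PowerSeries.constantCoeff := by
    ext f
    conv_lhs => rw [PowerSeries.eq_X_mul_shift_add_const f]
    rw [map_add, map_mul, hX, zero_mul, zero_add, ← PowerSeries.algebraMap_eq,
      ← IsScalarTower.algebraMap_apply, RingHom.comp_apply]
  have : Algebra.IsIntegral K F :=
    ⟨RingHom.IsIntegral.tower_top PowerSeries.constantCoeff (algebraMap K F)
      (hfactor ▸ algebraMap_isIntegral_iff.mpr inferInstance)⟩
  exact IsAlgClosed.algebraMap_bijective_of_isIntegral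

theorem exists_algHom_powerSeries_of_isDiscreteValuationRing {K V : Type*} [Field K] [CommRing V]
    [IsDomain V] [IsDiscreteValuationRing V] [Algebra K V]
    (hK : Function.Bijective (algebraMap K (IsLocalRing.ResidueField V))) :
    ∃ τ : V →ₐ[K] PowerSeries K, ∀ x, (τ x).order = IsDiscreteValuationRing.addVal V x := by
  obtain ⟨p, hp⟩ := IsDiscreteValuationRing.exists_irreducible V
  let residueEquiv := AlgEquiv.ofBijective (Algebra.ofId K (IsLocalRing.ResidueField V)) hK
  let ε : V →ₐ[K] K := (residueEquiv.symm : IsLocalRing.ResidueField V →ₐ[K] K).comp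
    (IsScalarTower.toAlgHom K V (IsLocalRing.ResidueField V))
  have hε : RingHom.ker ε = Ideal.span {p} := by
    ext x
    rw [← hp.maximalIdeal_eq, RingHom.mem_ker, ← IsLocalRing.residue_eq_zero_iff]
    exact residueEquiv.symm.map_eq_zero_iff
  obtain ⟨τ, hτ⟩ := exists_algHom_powerSeries_order_eq_emultiplicity
    (mem_nonZeroDivisors_of_ne_zero hp.ne_zero) hε
  refine ⟨τ, fun x => (hτ x).trans (ENat.eq_of_forall_natCast_le_iff fun n => ?_)⟩
  rw [← pow_dvd_iff_le_emultiplicity, ← IsDiscreteValuationRing.addVal_le_iff_dvd, hp.addVal_pow]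

theorem exists_algHom_powerSeries_of_isDedekindDomain (O : Type*) [CommRing O]
    [IsDedekindDomain O] [Algebra K O] [Algebra (PowerSeries K) O]
    [IsScalarTower K (PowerSeries K) O] [FaithfulSMul (PowerSeries K) O]
    [Algebra.IsIntegral (PowerSeries K) O] :
    ∃ (χ : O →ₐ[K] PowerSeries K) (e : ℕ), 0 < e ∧
      ∀ f : PowerSeries K, (χ (algebraMap (PowerSeries K) O f)).order = e * f.order := by
  obtain ⟨𝔭, h𝔭⟩ := Ideal.exists_maximal O
  let V := Localization.AtPrime 𝔭
  have : Algebra.IsIntegral (PowerSeries K) 𝔭.ResidueField := .trans O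
  have hX : algebraMap (PowerSeries K) O PowerSeries.X ∈ 𝔭 := by
    have hmax : (𝔭.comap (algebraMap (PowerSeries K) O)).IsMaximal :=
      Ideal.isMaximal_comap_of_isIntegral_of_isMaximal 𝔭
    rw [← Ideal.mem_comap, IsLocalRing.eq_maximalIdeal hmax, IsLocalRing.mem_maximalIdeal]
    exact PowerSeries.X_prime.not_isUnit
  have hX0 : algebraMap (PowerSeries K) O PowerSeries.X ≠ 0 :=
    (FaithfulSMul.algebraMap_injective (PowerSeries K) O).ne_iff' (map_zero _)
      |>.mpr PowerSeries.X_ne_zero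
  have : IsDiscreteValuationRing V :=
    IsLocalization.AtPrime.isDiscreteValuationRing_of_dedekind_domain O
      (ne_of_mem_of_not_mem' hX hX0) V
  obtain ⟨τ, hτ⟩ := exists_algHom_powerSeries_of_isDiscreteValuationRing (V := V)
    (algebraMap_bijective_of_isIntegral_powerSeries (K := K) 𝔭.ResidueField)
  let χ : O →ₐ[K] PowerSeries K := τ.comp (IsScalarTower.toAlgHom K O V)
  have hχX : (χ (algebraMap (PowerSeries K) O PowerSeries.X)).order ≠ 0 := by
    refine (hτ _).trans_ne fun h => ?_
    exact ((IsLocalization.AtPrime.isUnit_to_map_iff V 𝔭 _).mp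
      (IsDiscreteValuationRing.addVal_eq_zero_iff.mp h)) hX
  have hχX_top : (χ (algebraMap (PowerSeries K) O PowerSeries.X)).order ≠ ⊤ := by
    refine (hτ _).trans_ne fun h => hX0 ?_
    exact (map_eq_zero_iff _ (IsLocalization.injective V 𝔭.primeCompl_le_nonZeroDivisors)).mp
      (IsDiscreteValuationRing.addVal_eq_top_iff.mp h)
  obtain ⟨e, he⟩ := ENat.ne_top_iff_exists.mp hχX_top
  refine ⟨χ, e, Nat.pos_of_ne_zero fun h => hχX (he ▸ by simp [h]), fun f => ?_⟩
  rw [he]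
  exact order_map_eq_mul ((χ : O →+* PowerSeries K).comp (algebraMap (PowerSeries K) O)) hχX f

theorem exists_algHom_powerSeries_of_finite [CharZero K] (C : Type*) [CommRing C] [IsDomain C]
    [Algebra K C] [Algebra (PowerSeries K) C] [IsScalarTower K (PowerSeries K) C]
    [FaithfulSMul (PowerSeries K) C] [Module.Finite (PowerSeries K) C] :
    ∃ (χ : C →ₐ[K] PowerSeries K) (e : ℕ), 0 < e ∧
      ∀ f : PowerSeries K, (χ (algebraMap (PowerSeries K) C f)).order = e * f.order := by
  have : FaithfulSMul (PowerSeries K) (FractionRing C) := .trans (PowerSeries K) C _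
  have : Module.IsTorsionFree (PowerSeries K) C := inferInstance
  have : CharZero (PowerSeries K) :=
    charZero_of_injective_algebraMap (algebraMap K (PowerSeries K)).injective
  have : CharZero (FractionRing (PowerSeries K)) :=
    charZero_of_injective_algebraMap
      (IsFractionRing.injective (PowerSeries K) (FractionRing (PowerSeries K)))
  let := FractionRing.liftAlgebra (PowerSeries K) (FractionRing C)
  have : FiniteDimensional (FractionRing (PowerSeries K)) (FractionRing C) := inferInstance
  let O := integralClosure (PowerSeries K) (FractionRing C)
  have : FaithfulSMul (PowerSeries K) O :=
    FaithfulSMul.tower_bot (PowerSeries K) O (FractionRing C)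
  have : IsDedekindDomain O :=
    integralClosure.isDedekindDomain (PowerSeries K) (FractionRing (PowerSeries K)) (FractionRing C)
  obtain ⟨χ, e, he, hχ⟩ := exists_algHom_powerSeries_of_isDedekindDomain (K := K) O
  let toFrac := IsScalarTower.toAlgHom (PowerSeries K) C (FractionRing C)
  let incl : C →ₐ[PowerSeries K] O := toFrac.codRestrict O fun c =>
    (Algebra.IsIntegral.isIntegral (R := PowerSeries K) c).map toFrac
  refine ⟨χ.comp (incl.restrictScalars K), e, he, fun f => ?_⟩
  rw [← hχ f, ← incl.commutes]
  rfl

theorem exists_algHom_extension [CharZero K] {k R B : Type*} [CommRing k] [CommRing R]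
    [CommRing B] [IsDomain B] [Algebra k R] [Algebra k B] [Algebra R B] [IsScalarTower k R B]
    [FaithfulSMul R B] [Module.Finite R B] [Algebra k K] (ψ : R →ₐ[k] PowerSeries K)
    (hψ : Function.Injective ψ) :
    ∃ (φ : B →ₐ[k] PowerSeries K) (e : ℕ), 0 < e ∧
      ∀ g : R, (φ (algebraMap R B g)).order = e * (ψ g).order := by
  algebraize [(ψ : R →+* PowerSeries K)]
  have : FaithfulSMul R (PowerSeries K) := (faithfulSMul_iff_algebraMap_injective _ _).mpr hψ
  have : IsScalarTower k R (PowerSeries K) := .of_algebraMap_eq' ψ.comp_algebraMap.symm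
  obtain ⟨C, hC, ⟨ι⟩⟩ := exists_finite_extension (R := R) (A := PowerSeries K) (B := B)
  have : FaithfulSMul (PowerSeries K) (AlgebraicClosure (FractionRing (PowerSeries K))) :=
    .trans (PowerSeries K) (FractionRing (PowerSeries K)) _
  have : FaithfulSMul (PowerSeries K) C :=
    FaithfulSMul.tower_bot (PowerSeries K) C (AlgebraicClosure (FractionRing (PowerSeries K)))
  obtain ⟨χ, e, he, hχ⟩ := exists_algHom_powerSeries_of_finite (K := K) C
  refine ⟨(χ.restrictScalars k).comp (ι.restrictScalars k), e, he, fun g => ?_⟩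
  rw [← hχ (ψ g)]
  exact congrArg (fun c => (χ c).order) (ι.commutes g)

end ArcExtension

section GenericArc

section PolynomialRing

variable {F σ K : Type*} [CommRing F] [CommRing K] [Algebra F K]

/-- The arc `z_j ↦ u_j t` with `u_j = ι z_j`.  For injective `ι` the `u_j` are algebraically
independent and this is the generic line through the origin of affine space. -/
def genericArc (ι : MvPolynomial σ F →ₐ[F] K) : MvPolynomial σ F →ₐ[F] PowerSeries K :=
  MvPolynomial.aeval fun j => PowerSeries.C (ι (MvPolynomial.X j)) * PowerSeries.X

theorem genericArc_X (ι : MvPolynomial σ F →ₐ[F] K) (j : σ) :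
    genericArc ι (MvPolynomial.X j) = PowerSeries.C (ι (MvPolynomial.X j)) * PowerSeries.X :=
  MvPolynomial.aeval_X _ j

theorem genericArc_monomial (ι : MvPolynomial σ F →ₐ[F] K) (x : σ →₀ ℕ) (a : F) :
    genericArc ι (MvPolynomial.monomial x a) =
      PowerSeries.C (ι (MvPolynomial.monomial x a)) * PowerSeries.X ^ x.degree := by
  have hscalar : algebraMap F (PowerSeries K) a = PowerSeries.C (ι (MvPolynomial.C a)) := by
    rw [← MvPolynomial.algebraMap_eq, ι.commutes, PowerSeries.algebraMap_apply]
  rw [genericArc, MvPolynomial.aeval_monomial, MvPolynomial.monomial_eq, hscalar]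
  simp only [Finsupp.prod, mul_pow, Finset.prod_mul_distrib, map_mul, map_prod, map_pow,
    Finset.prod_pow_eq_pow_sum, mul_assoc, Finsupp.degree_apply]

theorem coeff_genericArc (ι : MvPolynomial σ F →ₐ[F] K) (n : ℕ) (p : MvPolynomial σ F) :
    PowerSeries.coeff n (genericArc ι p) = ι (MvPolynomial.homogeneousComponent n p) := by
  induction p using MvPolynomial.induction_on' with
  | add p q hp hq => simp only [map_add, hp, hq]
  | monomial x a =>
    rw [genericArc_monomial, PowerSeries.coeff_C_mul, PowerSeries.coeff_X_pow,
      MvPolynomial.homogeneousComponent_of_mem (MvPolynomial.isHomogeneous_monomial a rfl)]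
    split_ifs <;> simp

theorem le_order_genericArc_iff {ι : MvPolynomial σ F →ₐ[F] K} (hι : Function.Injective ι)
    {n : ℕ} {p : MvPolynomial σ F} :
    (n : ℕ∞) ≤ (genericArc ι p).order ↔ p ∈ MvPolynomial.idealOfVars σ F ^ n := by
  have hcoeff : (n : ℕ∞) ≤ (genericArc ι p).order ↔
      ∀ l < n, MvPolynomial.homogeneousComponent l p = 0 := by
    simp only [← map_eq_zero_iff ι hι, ← coeff_genericArc]
    exact ⟨fun h l hl => PowerSeries.coeff_of_lt_order l ((Nat.cast_lt.mpr hl).trans_le h),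
      PowerSeries.nat_le_order _ n⟩
  rw [hcoeff, MvPolynomial.mem_pow_idealOfVars_iff']
  refine ⟨fun h x hx => ?_, fun h l hl => MvPolynomial.ext _ _ fun x => ?_⟩
  · simpa [MvPolynomial.coeff_homogeneousComponent] using congrArg (MvPolynomial.coeff x) (h _ hx)
  · rw [MvPolynomial.coeff_homogeneousComponent]
    split_ifs with hx
    · exact h x (hx ▸ hl)
    · rfl

end PolynomialRing

theorem mPoly_eq_idealOfVars (F : Type) [Field F] (n : ℕ) :
    mPoly F n = MvPolynomial.idealOfVars (Fin n) F := by
  ext p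
  rw [← pow_one (MvPolynomial.idealOfVars (Fin n) F), MvPolynomial.mem_pow_idealOfVars_iff']
  simp [mPoly, RingHom.mem_ker, MvPolynomial.aeval_zero', MvPolynomial.constantCoeff_eq,
    Finsupp.degree_eq_zero_iff]

variable {k : Type} [Field k] {d : ℕ} {S : Type} [CommRing S]
  [Algebra (MvPolynomial (Fin d) k) S]

theorem zvar_mem_mS (j : Fin d) : zvar k d S j ∈ mS k d S :=
  Ideal.mem_map_of_mem _ (by simp [mPoly, RingHom.mem_ker])

theorem map_mem_pow_of_mem_mS_pow {A : Type*} [CommRing A] {J : Ideal A} (Φ : S →+* A)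
    (hΦ : ∀ j, Φ (zvar k d S j) ∈ J) {n : ℕ} {g : S} (hg : g ∈ mS k d S ^ n) :
    Φ g ∈ J ^ n := by
  have hle : (mS k d S).map Φ ≤ J := by
    rw [mS, mPoly_eq_idealOfVars, Ideal.map_map, MvPolynomial.idealOfVars, Ideal.map_span,
      Ideal.span_le]
    rintro _ ⟨_, ⟨j, rfl⟩, rfl⟩
    exact hΦ j
  exact Ideal.pow_right_mono hle n (Ideal.map_pow Φ _ n ▸ Ideal.mem_map_of_mem Φ hg)

variable [IsSLoc k d S]

theorem iInf_mS_pow [IsDomain S] : ⨅ n : ℕ, mS k d S ^ n = ⊥ := by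
  have : IsNoetherianRing S :=
    IsLocalization.isNoetherianRing (mPoly k d).primeCompl S inferInstance
  have : IsLocalRing S := IsLocalization.AtPrime.isLocalRing S (mPoly k d)
  have hmax : (mS k d S).IsMaximal := IsLocalization.AtPrime.isMaximal_map (mPoly k d) S
  exact Ideal.iInf_pow_eq_bot_of_isDomain _ hmax.ne_top

theorem le_order_iff_mem_mS_pow {K : Type*} [Field K] [Algebra k K]
    {ι : MvPolynomial (Fin d) k →ₐ[k] K} (hι : Function.Injective ι) {ψ : S →+* PowerSeries K}
    (hψ : ∀ p, ψ (algebraMap (MvPolynomial (Fin d) k) S p) = genericArc ι p) {n : ℕ} {g : S} :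
    (n : ℕ∞) ≤ (ψ g).order ↔ g ∈ mS k d S ^ n := by
  refine ⟨fun h => ?_, fun h => mem_tId_pow_iff.mp (map_mem_pow_of_mem_mS_pow ψ (fun j => ?_) h)⟩
  · obtain ⟨⟨p, s⟩, hps⟩ := IsLocalization.surj (mPoly k d).primeCompl g
    have hs : IsUnit (algebraMap (MvPolynomial (Fin d) k) S s) := IsLocalization.map_units S s
    have horder : (genericArc ι p).order = (ψ g).order := by
      rw [← hψ, ← hps, map_mul, PowerSeries.order_mul, PowerSeries.order_zero_of_unit (hs.map ψ),
        add_zero]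
    rw [← horder, le_order_genericArc_iff hι, ← mPoly_eq_idealOfVars] at h
    rw [← Ideal.mul_unit_mem_iff_mem _ hs, hps, mS, ← Ideal.map_pow]
    exact Ideal.mem_map_of_mem _ h
  · rw [zvar, hψ, genericArc_X]
    exact Ideal.mul_mem_left _ _ (Ideal.mem_span_singleton_self _)

theorem exists_algHom_powerSeries_order_eq_adicOrder [IsDomain S] [Algebra k S]
    [IsScalarTower k (MvPolynomial (Fin d) k) S] {K : Type*} [Field K] [Algebra k K]
    {ι : MvPolynomial (Fin d) k →ₐ[k] K} (hι : Function.Injective ι) :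
    ∃ ψ : S →ₐ[k] PowerSeries K, (∀ j, (ψ (zvar k d S j)).order = 1) ∧
      ∀ g ≠ 0, (ψ g).order = adicOrder (mS k d S) g := by
  have hunit (s : (mPoly k d).primeCompl) : IsUnit (genericArc ι s) := by
    rw [PowerSeries.isUnit_iff_constantCoeff, isUnit_iff_ne_zero, Ne,
      ← PowerSeries.one_le_order_iff_constCoeff_eq_zero, ← Nat.cast_one,
      le_order_genericArc_iff hι, pow_one, ← mPoly_eq_idealOfVars]
    exact s.2
  let ψ : S →ₐ[k] PowerSeries K := IsLocalization.liftAlgHom (f := genericArc ι) hunit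
  have hψ (p : MvPolynomial (Fin d) k) : ψ (algebraMap _ S p) = genericArc ι p :=
    IsLocalization.lift_eq hunit p
  refine ⟨ψ, fun j => ?_, fun g hg => ENat.eq_of_forall_natCast_le_iff fun n => ?_⟩
  · rw [zvar, hψ, genericArc_X, PowerSeries.order_mul, PowerSeries.order_X,
      PowerSeries.order_zero_of_unit, zero_add]
    exact ((isUnit_iff_ne_zero.mpr ((map_ne_zero_iff ι hι).mpr (MvPolynomial.X_ne_zero j))).map _)
  · rw [Nat.cast_le, ← mem_pow_iff_le_adicOrder iInf_mS_pow hg]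
    exact le_order_iff_mem_mS_pow hι (ψ := (ψ : S →+* PowerSeries K)) hψ

theorem exists_arc_order_eq_mul_adicOrder [CharZero k] [IsDomain S] [Algebra k S]
    [IsScalarTower k (MvPolynomial (Fin d) k) S] {B : Type*} [CommRing B] [IsDomain B]
    [Algebra k B] [Algebra S B] [IsScalarTower k S B] [FaithfulSMul S B] [Module.Finite S B]
    {M : ℕ} (hM : M ≠ 0) :
    ∃ (K : Type) (_ : Field K) (_ : Algebra k K) (φ : B →ₐ[k] PowerSeries K) (N : ℕ),
      0 < N ∧ M ∣ N ∧ (∀ j, (φ (algebraMap S B (zvar k d S j))).order = N) ∧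
        ∀ g ≠ 0, (φ (algebraMap S B g)).order = N * adicOrder (mS k d S) g := by
  let K := AlgebraicClosure (FractionRing (MvPolynomial (Fin d) k))
  have : CharZero K := charZero_of_injective_algebraMap (algebraMap k K).injective
  have hι : Function.Injective (IsScalarTower.toAlgHom k (MvPolynomial (Fin d) k) K) :=
    (FaithfulSMul.trans (MvPolynomial (Fin d) k) (FractionRing (MvPolynomial (Fin d) k)) K
      ).algebraMap_injective
  obtain ⟨ψ, hψz, hψ⟩ := exists_algHom_powerSeries_order_eq_adicOrder (S := S) hι
  have hψ_inj : Function.Injective ψ := (injective_iff_map_eq_zero ψ).mpr fun g hg => by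
    by_contra hg0
    simpa [hg] using hψ g hg0
  obtain ⟨φ, e, he, hφ⟩ := exists_algHom_extension (B := B) ψ hψ_inj
  have horder (g : S) : ((PowerSeries.expand M hM) (φ (algebraMap S B g))).order =
      (M * e : ℕ) * (ψ g).order := by
    rw [PowerSeries.order_expand, hφ, nsmul_eq_mul, Nat.cast_mul, mul_assoc]
  refine ⟨K, inferInstance, inferInstance, ((PowerSeries.expand M hM).restrictScalars k).comp φ,
    M * e, by positivity, dvd_mul_right M e, fun j => ?_, fun g hg => ?_⟩
  · exact (horder _).trans (by rw [hψz, mul_one])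
  · exact (horder g).trans (by rw [hψ g hg])

end GenericArc

section ArcsOfPresentations

theorem mem_tId_pow_ceil_of_pow_add_sum_eq_zero {K : Type*} [Field K] {r : NNReal} {b : ℕ}
    {s : Finset ℕ} (hs : ∀ j ∈ s, j < b) {β : ℕ → PowerSeries K} {x : PowerSeries K}
    (hβ : ∀ j ∈ s, β j ∈ tId K ^ ⌈r * (b - j : ℕ)⌉₊) (hx : x ^ b + ∑ j ∈ s, β j * x ^ j = 0) :
    x ∈ tId K ^ ⌈r⌉₊ := by
  rcases eq_or_ne x 0 with rfl | hx0
  · exact zero_mem _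
  obtain ⟨o, ho⟩ := ENat.ne_top_iff_exists.mp (mt PowerSeries.order_eq_top.mp hx0)
  rw [mem_tId_pow_iff, ← ho, Nat.cast_le, Nat.ceil_le]
  by_contra! hlt
  have hterm : ∀ j ∈ s, β j * x ^ j ∈ tId K ^ (o * b + 1) := fun j hj => by
    have hslope : o * (b - j) < ⌈r * (b - j : ℕ)⌉₊ := by
      rw [Nat.lt_ceil, Nat.cast_mul]
      exact mul_lt_mul_of_pos_right hlt (by simpa using hs j hj)
    have hsplit : o * b = o * (b - j) + o * j := by
      rw [← mul_add, Nat.sub_add_cancel (hs j hj).le]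
    refine Ideal.pow_le_pow_right (by omega : _ ≤ ⌈r * (b - j : ℕ)⌉₊ + o * j) ?_
    rw [pow_add, pow_mul]
    exact Ideal.mul_mem_mul (hβ j hj) (Ideal.pow_mem_pow (mem_tId_pow_iff.mpr ho.le) j)
  have hpow : x ^ b ∈ tId K ^ (o * b + 1) :=
    eq_neg_of_add_eq_zero_left hx ▸ neg_mem (sum_mem hterm)
  rw [mem_tId_pow_iff, PowerSeries.order_pow, ← ho, nsmul_eq_mul, mul_comm o] at hpow
  exact absurd hpow (by exact_mod_cast (b * o).lt_succ_self.not_ge)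

theorem degree_minPolyOf {R : Type*} [CommRing R] [Nontrivial R] (b : ℕ) (β : ℕ → R) :
    (minPolyOf b β).degree = b := by
  have hlower : (∑ j ∈ Finset.range (b - 1), C (β j) * X ^ j).degree < (X ^ b : R[X]).degree := by
    rw [degree_X_pow, ← mem_degreeLT]
    refine sum_mem fun j hj => mem_degreeLT.mpr ((degree_C_mul_X_pow_le j _).trans_lt ?_)
    rw [Finset.mem_range] at hj
    exact_mod_cast (by omega : j < b)
  rw [minPolyOf, degree_add_eq_left_of_degree_lt hlower, degree_X_pow]

theorem map_minPolyOf {R A : Type*} [CommRing R] [CommRing A] (f : R →+* A) (b : ℕ) (β : ℕ → R) :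
    (minPolyOf b β).map f = minPolyOf b fun j => f (β j) := by
  simp [minPolyOf, Polynomial.map_sum]

variable {k : Type} [Field k] {d : ℕ} {S : Type} [CommRing S] [IsDomain S]
  [Algebra (MvPolynomial (Fin d) k) S] (P : Presentation k d S)

theorem Bc_zero_ne_zero (i : Fin P.e) : P.Bc i 0 ≠ 0 := by
  intro h0
  have hb := P.hb i
  have hirr := P.hirr i
  rw [map_minPolyOf] at hirr
  have hroot : (minPolyOf (P.b i) fun j => algebraMap S (FractionRing S) (P.Bc i j)).IsRoot 0 := by
    simp [IsRoot, minPolyOf, eval_finsetSum, h0, zero_pow_eq, show P.b i ≠ 0 by omega]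
  have hdeg := degree_eq_one_of_irreducible_of_root hirr hroot
  rw [degree_minPolyOf, Nat.cast_eq_one] at hdeg
  omega

theorem exists_minimal_slope [IsSLoc k d S] : ∃ i, ∃ j ≤ P.b i - 2, P.Bc i j ≠ 0 ∧
    ∀ i', ∀ j' ≤ P.b i' - 2, P.Bc i' j' ∈
      mS k d S ^ ⌈(adicOrder (mS k d S) (P.Bc i j) / (P.b i - j : ℕ) : NNReal) *
        (P.b i' - j' : ℕ)⌉₊ := by
  let T : Set (Fin P.e × ℕ) := {x | x.2 ≤ P.b x.1 - 2 ∧ P.Bc x.1 x.2 ≠ 0}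
  have hfin : T.Finite := by
    refine (Set.finite_univ.prod (Set.finite_Iic (Finset.univ.sup P.b))).subset fun x hx => ?_
    exact ⟨trivial, hx.1.trans ((P.b x.1).sub_le 2 |>.trans (Finset.le_sup (Finset.mem_univ _)))⟩
  obtain ⟨i₀, j₀, hj₀, hB₀⟩ := P.hnz
  obtain ⟨⟨i, j⟩, ⟨hj, hB⟩, hmin⟩ := Set.exists_min_image T
    (fun x => (adicOrder (mS k d S) (P.Bc x.1 x.2) / (P.b x.1 - x.2 : ℕ) : NNReal)) hfin
    ⟨(i₀, j₀), hj₀, hB₀⟩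
  refine ⟨i, j, hj, hB, fun i' j' hj' => ?_⟩
  rcases eq_or_ne (P.Bc i' j') 0 with h0 | h0
  · exact h0 ▸ zero_mem _
  have hb' := P.hb i'
  rw [mem_pow_iff_le_adicOrder iInf_mS_pow h0, Nat.ceil_le, ← le_div_iff₀ (by norm_cast; omega)]
  exact hmin (i', j') ⟨hj', h0⟩

variable [Algebra k S] (D : Fin d → Derivation k S S)

theorem Bc_mem_elimAlg {i : Fin P.e} {j : ℕ} (hj : j ≤ P.b i - 2) :
    C (P.Bc i j) * X ^ (P.b i - j) ∈ elimAlg P D :=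
  Algebra.mem_sInf.mpr fun _ hG => hG.1 ⟨i, j, hj, rfl⟩

variable {P}

theorem elimAlg_le_slopeSubalgebra {r : NNReal} (hr : 1 ≤ r)
    (hB : ∀ i, ∀ j ≤ P.b i - 2, P.Bc i j ∈ mS k d S ^ ⌈r * (P.b i - j : ℕ)⌉₊) :
    elimAlg P D ≤ slopeSubalgebra (mS k d S) r := by
  refine diffClosure_le_slopeSubalgebra D hr ?_
  rintro _ ⟨i, j, hj, rfl⟩
  exact C_mul_X_pow_mem_slopeSubalgebra_iff.mpr (hB i j hj)

section

variable [IsSLoc k d S]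

variable (P) in
theorem exists_reesOrder_elimAlg_eq : ∃ i, ∃ j ≤ P.b i - 2, P.Bc i j ≠ 0 ∧
    reesOrder (mS k d S) (elimAlg P D) =
      (adicOrder (mS k d S) (P.Bc i j) : ℝ≥0∞) / (P.b i - j : ℕ) := by
  obtain ⟨i, j, hj, hB, hmin⟩ := exists_minimal_slope P
  have hb := P.hb i
  have hpos : 0 < P.b i - j := by omega
  refine ⟨i, j, hj, hB, le_antisymm
    (sInf_le ⟨_, _, hB, hpos, Bc_mem_elimAlg P D hj, rfl⟩) ?_⟩
  have hr : 1 ≤ (adicOrder (mS k d S) (P.Bc i j) / (P.b i - j : ℕ) : NNReal) := by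
    rw [one_le_div (by exact_mod_cast hpos), Nat.cast_le,
      ← mem_pow_iff_le_adicOrder iInf_mS_pow hB]
    exact P.hmem i j hj
  have hle := le_reesOrder_of_le_slopeSubalgebra iInf_mS_pow
    (elimAlg_le_slopeSubalgebra D hr hmin)
  rwa [ENNReal.coe_div (by exact_mod_cast hpos.ne'), ENNReal.coe_natCast,
    ENNReal.coe_natCast] at hle

theorem reesOrder_elimAlg_ne_top : reesOrder (mS k d S) (elimAlg P D) ≠ ⊤ := by
  obtain ⟨i, j, hj, -, h⟩ := exists_reesOrder_elimAlg_eq P D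
  have hb := P.hb i
  exact h ▸ ENNReal.div_ne_top (by simp) (by norm_cast; omega)

end

section Arc

variable {K : Type} [Field K] [Algebra k K] {φ : BRing P →ₐ[k] PowerSeries K}

variable (φ) in
theorem map_theta_pow_add_sum_eq_zero (i : Fin P.e) :
    φ (theta P i) ^ P.b i + ∑ j ∈ Finset.range (P.b i - 1),
      φ (algebraMap S (BRing P) (P.Bc i j)) * φ (theta P i) ^ j = 0 := by
  simpa [minPolyOf, theta] using congrArg φ (P.hroot i)

theorem map_theta_ne_zero (hφ : ∀ g : S, g ≠ 0 → φ (algebraMap S (BRing P) g) ≠ 0)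
    (i : Fin P.e) : φ (theta P i) ≠ 0 := by
  intro h0
  have hb := P.hb i
  have hsum := map_theta_pow_add_sum_eq_zero φ i
  rw [h0, zero_pow (by omega), zero_add, Finset.sum_eq_single_of_mem 0
    (Finset.mem_range.mpr (by omega)) (fun j _ hj => by rw [zero_pow hj, mul_zero]),
    pow_zero, mul_one] at hsum
  exact hφ _ (Bc_zero_ne_zero P i) hsum

theorem map_algebraMap_mem_tId_pow {N : ℕ}
    (hz : ∀ j, φ (algebraMap S (BRing P) (zvar k d S j)) ∈ tId K ^ N) {n : ℕ} {g : S}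
    (hg : g ∈ mS k d S ^ n) : φ (algebraMap S (BRing P) g) ∈ tId K ^ (N * n) :=
  pow_mul (tId K) N n ▸ map_mem_pow_of_mem_mS_pow
    ((φ : BRing P →+* PowerSeries K).comp (algebraMap S (BRing P))) hz hg

theorem map_algebraMap_mem_tId_pow_ceil {N : ℕ}
    (hz : ∀ j, φ (algebraMap S (BRing P) (zvar k d S j)) ∈ tId K ^ N) {r : NNReal} {l : ℕ} {g : S}
    (hg : g ∈ mS k d S ^ ⌈r * l⌉₊) : φ (algebraMap S (BRing P) g) ∈ tId K ^ ⌈r * N * l⌉₊ := by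
  refine Ideal.pow_le_pow_right (Nat.ceil_le.mpr ?_) (map_algebraMap_mem_tId_pow hz hg)
  calc r * N * l = N * (r * l) := by ring
    _ ≤ N * ⌈r * l⌉₊ := by gcongr; exact Nat.le_ceil _
    _ = (N * ⌈r * l⌉₊ : ℕ) := by push_cast; rfl

theorem map_theta_mem_tId_pow_ceil {N : ℕ}
    (hz : ∀ j, φ (algebraMap S (BRing P) (zvar k d S j)) ∈ tId K ^ N) {r : NNReal} {i : Fin P.e}
    (hB : ∀ j ≤ P.b i - 2, P.Bc i j ∈ mS k d S ^ ⌈r * (P.b i - j : ℕ)⌉₊) :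
    φ (theta P i) ∈ tId K ^ ⌈r * N⌉₊ := by
  have hrange : ∀ j ∈ Finset.range (P.b i - 1), j < P.b i ∧ j ≤ P.b i - 2 := fun j hj => by
    have := Finset.mem_range.mp hj
    omega
  exact mem_tId_pow_ceil_of_pow_add_sum_eq_zero (fun j hj => (hrange j hj).1)
    (fun j hj => map_algebraMap_mem_tId_pow_ceil hz (hB j (hrange j hj).2))
    (map_theta_pow_add_sum_eq_zero φ i)

theorem map_theta_mem_tId_pow {N : ℕ}
    (hz : ∀ j, φ (algebraMap S (BRing P) (zvar k d S j)) ∈ tId K ^ N) (i : Fin P.e) :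
    φ (theta P i) ∈ tId K ^ N := by
  simpa using map_theta_mem_tId_pow_ceil hz (r := 1) (i := i) (by simpa using P.hmem i)

theorem le_arcOrd_iff (hφ : IsArc P φ) {n : ℕ} :
    n ≤ arcOrd P φ ↔ ∀ j, φ (algebraMap S (BRing P) (zvar k d S j)) ∈ tId K ^ n := by
  obtain ⟨-, -, hθ, hz⟩ := hφ
  have hord {f : PowerSeries K} (hf : f ≠ 0) : n ≤ tOrd f ↔ f ∈ tId K ^ n :=
    (mem_pow_iff_le_adicOrder (iInf_tId_pow K) hf).symm
  have : Nonempty (Fin P.e) := ⟨⟨0, P.he⟩⟩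
  rw [arcOrd, le_csInf_iff (OrderBot.bddBelow _)
    ((Set.range_nonempty _).mono Set.subset_union_left)]
  simp only [Set.mem_union, or_imp, forall_and, Set.forall_mem_range, hord (hθ _), hord (hz _)]
  exact and_iff_right_of_imp map_theta_mem_tId_pow

theorem arcOrd_pos (hφ : IsArc P φ) : 0 < arcOrd P φ :=
  (le_arcOrd_iff hφ).mpr fun j => (pow_one (tId K)).symm ▸ hφ.1 _ (zvar_mem_mS j)

theorem isArc_of_order_eq {N : ℕ} (hN : 0 < N)
    (hz : ∀ j, (φ (algebraMap S (BRing P) (zvar k d S j))).order = N)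
    (hφ : ∀ g : S, g ≠ 0 → φ (algebraMap S (BRing P) g) ≠ 0) : IsArc P φ := by
  have hmem (j) : φ (algebraMap S (BRing P) (zvar k d S j)) ∈ tId K ^ 1 :=
    mem_tId_pow_iff.mpr (by rw [hz]; exact_mod_cast hN)
  refine ⟨fun g hg => ?_, fun i => ?_, map_theta_ne_zero hφ, fun j h0 => ?_⟩
  · simpa using map_algebraMap_mem_tId_pow hmem (n := 1) (by simpa using hg)
  · simpa using map_theta_mem_tId_pow hmem i
  · simpa [h0] using hz j

theorem arcOrd_eq_of_order_eq (hd : 0 < d) (hφ : IsArc P φ) {N : ℕ}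
    (hz : ∀ j, (φ (algebraMap S (BRing P) (zvar k d S j))).order = N) : arcOrd P φ = N := by
  refine eq_of_forall_le_iff fun n => ?_
  simp only [le_arcOrd_iff hφ, mem_tId_pow_iff, hz, Nat.cast_le]
  exact ⟨fun h => h ⟨0, hd⟩, fun h _ => h⟩

variable (φ) in
theorem rho_eq_floor_rOrd : rho P D φ = ⌊(rOrd P D φ).toReal⌋₊ :=
  persist_eq_floor_reesOrder PowerSeries.X_ne_zero (iInf_tId_pow K) _

variable {D}

theorem rOrd_ne_top {i : Fin P.e} (hθ : φ (theta P i) ≠ 0) : rOrd P D φ ≠ ⊤ := by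
  have hmem : C (φ (theta P i)) * X ^ 1 ∈ contactAlg P D φ :=
    Algebra.subset_adjoin (Or.inl ⟨i, by rw [pow_one]⟩)
  have hle : rOrd P D φ ≤ tOrd (φ (theta P i)) / (1 : ℕ) :=
    sInf_le ⟨_, 1, hθ, le_rfl, hmem, rfl⟩
  exact (hle.trans_lt (ENNReal.div_lt_top (by simp) (by simp))).ne

theorem rOrd_le {g : S} {l : ℕ} (hl : 1 ≤ l) (hg : C g * X ^ l ∈ elimAlg P D)
    (hg0 : φ (algebraMap S (BRing P) g) ≠ 0) :
    rOrd P D φ ≤ tOrd (φ (algebraMap S (BRing P) g)) / l :=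
  sInf_le ⟨_, l, hg0, hl, Algebra.subset_adjoin (Or.inr ⟨g, l, hg, hg0, rfl⟩), rfl⟩

variable [IsSLoc k d S]

theorem contactAlg_le_slopeSubalgebra {N : ℕ}
    (hz : ∀ j, φ (algebraMap S (BRing P) (zvar k d S j)) ∈ tId K ^ N) {r : NNReal}
    (hr : r ≤ reesOrder (mS k d S) (elimAlg P D)) :
    contactAlg P D φ ≤ slopeSubalgebra (tId K) (r * N) := by
  have hslope := (le_reesOrder_iff iInf_mS_pow).mp hr
  refine Algebra.adjoin_le ?_
  rintro _ (⟨i, rfl⟩ | ⟨g, l, hg, -, rfl⟩)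
  · have hθ := map_theta_mem_tId_pow_ceil hz (i := i) fun j hj =>
      hslope _ _ (Bc_mem_elimAlg P D hj)
    have hmem := C_mul_X_pow_mem_slopeSubalgebra_iff (m := tId K) (r := r * N) (l := 1).mpr
      (by simpa using hθ)
    simpa using hmem
  · exact C_mul_X_pow_mem_slopeSubalgebra_iff.mpr
      (map_algebraMap_mem_tId_pow_ceil hz (hslope g l hg))

theorem reesOrder_elimAlg_mul_le_rOrd {N : ℕ}
    (hz : ∀ j, φ (algebraMap S (BRing P) (zvar k d S j)) ∈ tId K ^ N) :
    reesOrder (mS k d S) (elimAlg P D) * N ≤ rOrd P D φ := by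
  have hr := ENNReal.coe_toNNReal (reesOrder_elimAlg_ne_top (P := P) D)
  have hle := le_reesOrder_of_le_slopeSubalgebra (iInf_tId_pow K)
    (contactAlg_le_slopeSubalgebra hz hr.le)
  rwa [ENNReal.coe_mul, hr, ENNReal.coe_natCast] at hle

theorem floor_mul_arcOrd_le_rho (hφ : IsArc P φ) :
    ⌊(reesOrder (mS k d S) (elimAlg P D)).toReal⌋₊ * arcOrd P φ ≤ rho P D φ := by
  have hle := reesOrder_elimAlg_mul_le_rOrd (D := D) ((le_arcOrd_iff hφ).mp le_rfl)
  have hle_real := ENNReal.toReal_mono (rOrd_ne_top (hφ.2.2.1 ⟨0, P.he⟩)) hle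
  rw [ENNReal.toReal_mul, ENNReal.toReal_natCast] at hle_real
  rw [rho_eq_floor_rOrd]
  refine Nat.le_floor (le_trans ?_ hle_real)
  push_cast
  gcongr
  exact Nat.floor_le ENNReal.toReal_nonneg

theorem rOrd_eq_reesOrder_elimAlg_mul {N : ℕ}
    (hz : ∀ j, φ (algebraMap S (BRing P) (zvar k d S j)) ∈ tId K ^ N)
    (hφ : ∀ g : S, g ≠ 0 → (φ (algebraMap S (BRing P) g)).order = N * adicOrder (mS k d S) g) :
    rOrd P D φ = reesOrder (mS k d S) (elimAlg P D) * N := by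
  refine le_antisymm ?_ (reesOrder_elimAlg_mul_le_rOrd hz)
  obtain ⟨i, j, hj, hB, hord⟩ := exists_reesOrder_elimAlg_eq P D
  have hb := P.hb i
  have hB0 : φ (algebraMap S (BRing P) (P.Bc i j)) ≠ 0 :=
    ne_zero_of_order_eq_natCast (n := N * _) (by exact_mod_cast hφ _ hB)
  have htOrd : tOrd (φ (algebraMap S (BRing P) (P.Bc i j))) = N * adicOrder (mS k d S) (P.Bc i j) :=
    by exact_mod_cast (coe_tOrd hB0).trans (hφ _ hB)
  refine (rOrd_le (by omega) (Bc_mem_elimAlg P D hj) hB0).trans_eq ?_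
  rw [hord, htOrd, Nat.cast_mul, mul_comm, ENNReal.mul_div_right_comm]

end Arc

theorem exists_isArc_rho_eq [CharZero k] [IsScalarTower k (MvPolynomial (Fin d) k) S]
    [IsSLoc k d S] (hd : 0 < d) :
    ∃ (K : Type) (_ : Field K) (_ : Algebra k K) (φ : BRing P →ₐ[k] PowerSeries K),
      IsArc P φ ∧ (rho P D φ : ℝ≥0∞) = reesOrder (mS k d S) (elimAlg P D) * arcOrd P φ := by
  obtain ⟨i, j, hj, -, hord⟩ := exists_reesOrder_elimAlg_eq P D
  have hb := P.hb i
  have hM : P.b i - j ≠ 0 := by omega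
  have := P.hprime
  have := P.hfinite
  have : FaithfulSMul S (BRing P) := (faithfulSMul_iff_algebraMap_injective _ _).mpr P.hinj
  obtain ⟨K, _, _, φ, N, hN, ⟨N', rfl⟩, hz, hφ⟩ :=
    exists_arc_order_eq_mul_adicOrder (k := k) (d := d) (S := S) (B := BRing P) hM
  have hinj : ∀ g : S, g ≠ 0 → φ (algebraMap S (BRing P) g) ≠ 0 := fun g hg =>
    ne_zero_of_order_eq_natCast (hφ g hg)
  have harc := isArc_of_order_eq hN hz hinj
  have hrOrd : rOrd P D φ = (adicOrder (mS k d S) (P.Bc i j) * N' : ℕ) := by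
    rw [rOrd_eq_reesOrder_elimAlg_mul (fun j => mem_tId_pow_iff.mpr (hz j).ge) hφ, hord,
      Nat.cast_mul, ← mul_assoc, ENNReal.div_mul_cancel (by exact_mod_cast hM) (by simp),
      Nat.cast_mul]
  refine ⟨K, _, _, φ, harc, ?_⟩
  rw [arcOrd_eq_of_order_eq hd harc hz, rho_eq_floor_rOrd, hrOrd, ENNReal.toReal_natCast,
    Nat.floor_natCast, ← hrOrd, rOrd_eq_reesOrder_elimAlg_mul
      (fun j => mem_tId_pow_iff.mpr (hz j).ge) hφ]

end ArcsOfPresentations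

/-- (Theorem `thm:main_order-rho`.)  (i) For every arc `φ` in `X` through `ξ`,
`ρ_{X,φ} ≥ ⌊ord(G_X^{(d)})⌋ · ord(φ)`; (ii) the infimum over all arcs `φ` of
`⌊ρ_{X,φ}/ord(φ)⌋` equals `⌊ord(G_X^{(d)})⌋`; (iii) there is an arc `φ₀` with
`ρ_{X,φ₀}/ord(φ₀) = ord(G_X^{(d)})`. -/
theorem persistance_bounds_via_elimination_order
    (k : Type) [Field k] [CharZero k] (d : ℕ) (hd : 1 ≤ d)
    (S : Type) [CommRing S] [IsDomain S] [Algebra (MvPolynomial (Fin d) k) S]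
    [Algebra k S] [IsScalarTower k (MvPolynomial (Fin d) k) S] [IsSLoc k d S]
    (D : Fin d → Derivation k S S)
    (hD : ∀ i j : Fin d, D j (zvar k d S i) = if i = j then 1 else 0)
    (P : Presentation k d S) :
    (∀ (K : Type) (_ : Field K) (_ : Algebra k K)
        (φ : BRing P →ₐ[k] PowerSeries K), IsArc P φ →
        Nat.floor (reesOrder (mS k d S) (elimAlg P D)).toReal * arcOrd P φ ≤ rho P D φ) ∧
    sInf {n : ℕ | ∃ (K : Type) (_ : Field K) (_ : Algebra k K)
        (φ : BRing P →ₐ[k] PowerSeries K), IsArc P φ ∧ n = rho P D φ / arcOrd P φ} =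
      Nat.floor (reesOrder (mS k d S) (elimAlg P D)).toReal ∧
    ∃ (K : Type) (_ : Field K) (_ : Algebra k K)
      (φ : BRing P →ₐ[k] PowerSeries K), IsArc P φ ∧
      (rho P D φ : ℝ≥0∞) / (arcOrd P φ : ℝ≥0∞) = reesOrder (mS k d S) (elimAlg P D) := by
  obtain ⟨K₀, _, _, φ₀, harc, hrho⟩ := exists_isArc_rho_eq (P := P) D hd
  have hquot : (rho P D φ₀ : ℝ≥0∞) / arcOrd P φ₀ = reesOrder (mS k d S) (elimAlg P D) := by
    rw [hrho, ENNReal.mul_div_cancel_right (by exact_mod_cast (arcOrd_pos harc).ne') (by simp)]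
  have hfloor : rho P D φ₀ / arcOrd P φ₀ =
      ⌊(reesOrder (mS k d S) (elimAlg P D)).toReal⌋₊ := by
    rw [← hquot, ENNReal.toReal_div, ENNReal.toReal_natCast, ENNReal.toReal_natCast,
      Nat.floor_div_eq_div]
  refine ⟨fun K _ _ φ hφ => floor_mul_arcOrd_le_rho hφ, ?_, K₀, _, _, φ₀, harc, hquot⟩
  refine IsLeast.csInf_eq ⟨⟨K₀, _, _, φ₀, harc, hfloor.symm⟩, ?_⟩
  rintro _ ⟨K, _, _, φ, hφ, rfl⟩
  exact (Nat.le_div_iff_mul_le (arcOrd_pos hφ)).mpr (floor_mul_arcOrd_le_rho hφ)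

end NashMult
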